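/- There exists a constant C > 0 such that for every Horton set H of n ≥ 2 points, every point q ∈ H is a vertex of at most C·n·log n empty triangles of H. -/

import Mathlib

open scoped Classical

noncomputable section

/-- Euclidean distance between two points of the plane `ℝ × ℝ`. -/
def elen (p q : ℝ × ℝ) : ℝ := Real.sqrt ((p.1 - q.1) ^ 2 + (p.2 - q.2) ^ 2)

/-- Orientation determinant of an ordered triple of points. -/
def orient (a b c : ℝ × ℝ) : ℝ :=
  (b.1 - a.1) * (c.2 - a.2) - (b.2 - a.2) * (c.1 - a.1)

/-- A planar point set is in general position if no three distinct points are collinear. -/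
def GeneralPosition (S : Set (ℝ × ℝ)) : Prop :=
  ∀ a ∈ S, ∀ b ∈ S, ∀ c ∈ S, a ≠ b → a ≠ c → b ≠ c →
    ¬ Collinear ℝ ({a, b, c} : Set (ℝ × ℝ))

/-- No two points of `S` share an `x`-coordinate. -/
def DistinctX (S : Set (ℝ × ℝ)) : Prop :=
  ∀ a ∈ S, ∀ b ∈ S, a ≠ b → a.1 ≠ b.1

/-- `p` lies strictly below the (non-vertical) line through `a` and `b`, where `a.1 < b.1`. -/
def StrictlyBelow (p a b : ℝ × ℝ) : Prop :=
  (b.1 - a.1) * (p.2 - a.2) < (b.2 - a.2) * (p.1 - a.1)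

/-- `p` lies strictly above the (non-vertical) line through `a` and `b`, where `a.1 < b.1`. -/
def StrictlyAbove (p a b : ℝ × ℝ) : Prop :=
  (b.2 - a.2) * (p.1 - a.1) < (b.1 - a.1) * (p.2 - a.2)

/-- `Y` is high above `X`: every line through two points of `Y` is above every point of `X`. -/
def HighAbove (Y X : Set (ℝ × ℝ)) : Prop :=
  ∀ a ∈ Y, ∀ b ∈ Y, a.1 < b.1 → ∀ p ∈ X, StrictlyBelow p a b

/-- `X` is deep below `Y`: every line through two points of `X` is below every point of `Y`. -/
def DeepBelow (X Y : Set (ℝ × ℝ)) : Prop :=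
  ∀ a ∈ X, ∀ b ∈ X, a.1 < b.1 → ∀ p ∈ Y, StrictlyAbove p a b

/-- The even-indexed points of `H` in increasing order of `x`-coordinate (`H₀`). -/
def evenPart (H : Finset (ℝ × ℝ)) : Finset (ℝ × ℝ) :=
  H.filter fun p => Even (H.filter fun q => q.1 < p.1).card

/-- The odd-indexed points of `H` in increasing order of `x`-coordinate (`H₁`). -/
def oddPart (H : Finset (ℝ × ℝ)) : Finset (ℝ × ℝ) :=
  H.filter fun p => ¬ Even (H.filter fun q => q.1 < p.1).card

/-- Horton sets. -/
inductive IsHorton : Finset (ℝ × ℝ) → Prop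
  | small (H : Finset (ℝ × ℝ)) (hgp : GeneralPosition ↑H) (hx : DistinctX ↑H)
      (hcard : H.card ≤ 2) : IsHorton H
  | split (H : Finset (ℝ × ℝ)) (hgp : GeneralPosition ↑H) (hx : DistinctX ↑H)
      (hcard : 2 < H.card) (h0 : IsHorton (evenPart H)) (h1 : IsHorton (oddPart H))
      (hhigh : HighAbove ↑(oddPart H) ↑(evenPart H))
      (hdeep : DeepBelow ↑(evenPart H) ↑(oddPart H)) : IsHorton H

/-- `t` is an empty triangle of the point set `S`: a three-element non-collinear subset of `S`
whose open interior contains no point of `S`. -/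
def IsEmptyTriangleOf (S : Set (ℝ × ℝ)) (t : Finset (ℝ × ℝ)) : Prop :=
  t.card = 3 ∧ (↑t : Set (ℝ × ℝ)) ⊆ S ∧ ¬ Collinear ℝ (↑t : Set (ℝ × ℝ)) ∧
    ∀ p ∈ S, p ∉ interior (convexHull ℝ (↑t : Set (ℝ × ℝ)))

/-- `τ S`: the number of empty triangles of `S`. -/
def tau (S : Set (ℝ × ℝ)) : ℕ :=
  {t : Finset (ℝ × ℝ) | IsEmptyTriangleOf S t}.ncard

/-- The number of empty triangles of `S` stabbed by the point `q`. -/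
def stabbedCount (S : Set (ℝ × ℝ)) (q : ℝ × ℝ) : ℕ :=
  {t : Finset (ℝ × ℝ) | IsEmptyTriangleOf S t ∧
    q ∈ interior (convexHull ℝ (↑t : Set (ℝ × ℝ)))}.ncard

/-- The number of empty triangles of `S` having `q` as a vertex. -/
def incidentCount (S : Set (ℝ × ℝ)) (q : ℝ × ℝ) : ℕ :=
  {t : Finset (ℝ × ℝ) | IsEmptyTriangleOf S t ∧ q ∈ t}.ncard

/-!
Split `H` into its halves `A` (even) and `B` (odd). In an empty triangle with two vertices `u`, `v`
in one half and the third in the other, the segment `uv` is *visible* from the side of the other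
half: a point of its own half over `uv` would lie inside the triangle. Hence, for `q ∈ A`, the third
vertex of an empty triangle with vertices `q` and `b ∈ B` is a visible neighbour of `q` in `A` or of
`b` in `B`.

Visible degrees are logarithmic. Seen from above, two points of `A` do not see each other, since a
point of `B` between them blocks the segment, and a point sees at most two points of the other half,
one on its left and one on its right. So passing from `B` to `H` raises the degrees by at most `2`,
while the size doubles.

The `B`-vertices removed at the successive levels of the recursion are distinct, so at most `n` of
them are used in total, each for `O(log n)` triangles.
-/

section LinearOrder

variable {α : Type*} [LinearOrder α]

theorem mem_uIoo_cases {x y z : α} (h : y ∈ Set.uIoo x z) : x < y ∧ y < z ∨ z < y ∧ y < x := by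
  simpa only [Set.uIoo_eq_union, Set.mem_union, Set.mem_Ioo] using h

theorem mem_uIoo_trans {x y z w : α} (hy : y ∈ Set.uIoo x z) (hw : w ∈ Set.uIoo y z) :
    w ∈ Set.uIoo x z := by
  rcases mem_uIoo_cases hy with ⟨hxy, hyz⟩ | ⟨hzy, hyx⟩
  · rw [Set.uIoo_of_lt hyz] at hw
    exact Set.mem_uIoo_of_lt (hxy.trans hw.1) hw.2
  · rw [Set.uIoo_of_gt hzy] at hw
    exact Set.mem_uIoo_of_gt hw.1 (hw.2.trans hyx)

theorem ne_of_fst_mem_uIoo_left {β : Type*} {a b c : α × β} (h : c.1 ∈ Set.uIoo a.1 b.1) :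
    c ≠ a := by
  rintro rfl
  exact Set.left_notMem_uIoo h

theorem ne_of_fst_mem_uIoo_right {β : Type*} {a b c : α × β} (h : c.1 ∈ Set.uIoo a.1 b.1) :
    c ≠ b := by
  rintro rfl
  exact Set.right_notMem_uIoo h

theorem card_le_two_of_forall_notMem_uIoo {ι : Type*} {S : Finset ι} {f : ι → α} {x : α}
    (hf : Set.InjOn f S) (hx : ∀ i ∈ S, f i ≠ x)
    (h : ∀ i ∈ S, ∀ j ∈ S, f i ∉ Set.uIoo x (f j)) : S.card ≤ 2 := by
  have card_lt_le_one : (S.filter fun i => f i < x).card ≤ 1 := by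
    refine Finset.card_le_one.2 fun i hi j hj => ?_
    rw [Finset.mem_filter] at hi hj
    by_contra hij
    rcases lt_or_gt_of_ne (hf.ne hi.1 hj.1 hij) with hlt | hlt
    · exact h j hj.1 i hi.1 (Set.mem_uIoo_of_gt hlt hj.2)
    · exact h i hi.1 j hj.1 (Set.mem_uIoo_of_gt hlt hi.2)
  have card_gt_le_one : (S.filter fun i => ¬ f i < x).card ≤ 1 := by
    refine Finset.card_le_one.2 fun i hi j hj => ?_
    rw [Finset.mem_filter] at hi hj
    have hxi : x < f i := (hx i hi.1).symm.lt_of_le (not_lt.1 hi.2)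
    have hxj : x < f j := (hx j hj.1).symm.lt_of_le (not_lt.1 hj.2)
    by_contra hij
    rcases lt_or_gt_of_ne (hf.ne hi.1 hj.1 hij) with hlt | hlt
    · exact h i hi.1 j hj.1 (Set.mem_uIoo_of_lt hxi hlt)
    · exact h j hj.1 i hi.1 (Set.mem_uIoo_of_lt hxj hlt)
  have card_add_card := S.card_filter_add_card_filter_not fun i => f i < x
  omega

end LinearOrder

theorem clog_two_add_one_le {m n : ℕ} (hn : 2 ≤ n) (hm : m ≤ (n + 1) / 2) :
    Nat.clog 2 m + 1 ≤ Nat.clog 2 n := by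
  rw [Nat.clog_of_two_le one_lt_two hn]
  exact Nat.succ_le_succ (Nat.clog_mono_right 2 hm)

theorem clog_two_le_two_mul_logb {n : ℕ} (hn : 2 ≤ n) :
    (Nat.clog 2 n : ℝ) ≤ 2 * Real.logb 2 n := by
  have one_le : 1 ≤ Real.logb 2 n := by
    rw [Real.le_logb_iff_rpow_le one_lt_two (by positivity), Real.rpow_one]
    exact_mod_cast hn
  have ceil_lt := Nat.ceil_lt_add_one (zero_le_one.trans one_le)
  rw [← Nat.cast_two, Real.natCeil_logb_natCast, Nat.cast_two] at ceil_lt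
  linarith

theorem exists_eq_triple_of_card_eq_three {α : Type*} [DecidableEq α] {t : Finset α} {a b : α}
    (ht : t.card = 3) (ha : a ∈ t) (hb : b ∈ t) (hab : a ≠ b) :
    ∃ c, c ≠ a ∧ c ≠ b ∧ t = {a, b, c} := by
  have hb' : b ∈ t.erase a := Finset.mem_erase.2 ⟨hab.symm, hb⟩
  obtain ⟨c, hc⟩ : ∃ c, (t.erase a).erase b = {c} := by
    rw [← Finset.card_eq_one, Finset.card_erase_of_mem hb', Finset.card_erase_of_mem ha, ht]
  have hct : c ∈ (t.erase a).erase b := hc ▸ Finset.mem_singleton_self c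
  rw [Finset.mem_erase, Finset.mem_erase] at hct
  exact ⟨c, hct.2.1, hct.1, by rw [← hc, Finset.insert_erase hb', Finset.insert_erase ha]⟩

section Orientation

variable {s : ℤˣ} {a b c p : ℝ × ℝ}

theorem orient_rotate (a b c : ℝ × ℝ) : orient b c a = orient a b c := by
  unfold orient; ring

theorem orient_swap (a b c : ℝ × ℝ) : orient b a c = -orient a b c := by
  unfold orient; ring

theorem mem_convexHull_of_orient_pos (hc : 0 < orient a b p) (ha : 0 < orient b c p)
    (hb : 0 < orient c a p) : p ∈ convexHull ℝ ({a, b, c} : Set (ℝ × ℝ)) := by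
  let weight : Fin 3 → ℝ := ![orient b c p, orient c a p, orient a b p]
  let vertex : Fin 3 → ℝ × ℝ := ![a, b, c]
  have weight_pos : ∀ i, 0 < weight i := by
    simp [Fin.forall_fin_succ, weight, ha, hb, hc]
  have sum_pos : 0 < ∑ i, weight i := Finset.sum_pos (fun i _ => weight_pos i) Finset.univ_nonempty
  have barycentric : p = Finset.univ.centerMass weight vertex := by
    rw [Finset.centerMass, eq_inv_smul_iff₀ sum_pos.ne']
    simp only [weight, vertex, Fin.sum_univ_three, Matrix.cons_val]
    ext <;> simp only [orient, Prod.fst_add, Prod.snd_add, Prod.smul_fst, Prod.smul_snd,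
      smul_eq_mul] <;> ring
  rw [barycentric]
  refine Finset.centerMass_mem_convexHull _ (fun i _ => (weight_pos i).le) sum_pos fun i _ => ?_
  fin_cases i <;> simp [vertex]

theorem mem_interior_convexHull_of_orient_pos (hc : 0 < orient a b p) (ha : 0 < orient b c p)
    (hb : 0 < orient c a p) : p ∈ interior (convexHull ℝ ({a, b, c} : Set (ℝ × ℝ))) := by
  have isOpen_orient_pos (u v : ℝ × ℝ) : IsOpen {x | 0 < orient u v x} := by
    unfold orient
    exact isOpen_lt (by fun_prop) (by fun_prop)
  refine interior_maximal (fun x hx => ?_)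
    (((isOpen_orient_pos a b).inter (isOpen_orient_pos b c)).inter (isOpen_orient_pos c a))
    ⟨⟨hc, ha⟩, hb⟩
  exact mem_convexHull_of_orient_pos hx.1.1 hx.1.2 hx.2

/-- `p` lies strictly on the side `s` of the non-vertical line through `a` and `b`, where `s = 1`
means above and `s = -1` means below. The factor `b.1 - a.1` makes the notion independent of the
order of `a` and `b`. -/
def OnSide (s : ℤˣ) (a b p : ℝ × ℝ) : Prop :=
  0 < s • ((b.1 - a.1) * orient a b p)

theorem onSide_comm : OnSide s a b p ↔ OnSide s b a p := by
  unfold OnSide orient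
  ring_nf

theorem onSide_iff_of_lt (h : a.1 < b.1) : OnSide s a b p ↔ 0 < s • orient a b p := by
  rw [OnSide, ← mul_smul_comm, mul_pos_iff_of_pos_left (sub_pos.2 h)]

theorem onSide_of_mem_uIoo (hp : p.1 ∈ Set.uIoo a.1 b.1) (h : OnSide (-s) p b a) :
    OnSide s a b p := by
  have orient_eq : orient a b p = -orient p b a := by
    rw [← orient_rotate a b p, orient_swap p b a]
  rcases mem_uIoo_cases hp with ⟨hap, hpb⟩ | ⟨hbp, hpa⟩
  · rw [onSide_iff_of_lt hpb] at h
    rwa [onSide_iff_of_lt (hap.trans hpb), orient_eq, smul_neg, ← Units.neg_smul]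
  · rw [onSide_comm, onSide_iff_of_lt hbp, orient_swap, Units.neg_smul, smul_neg, neg_neg] at h
    rwa [onSide_comm, onSide_iff_of_lt (hbp.trans hpa), orient_swap, orient_eq, neg_neg]

theorem mem_interior_convexHull_of_onSide (hp : p.1 ∈ Set.uIoo a.1 b.1) (hab : OnSide s a b p)
    (hap : OnSide s a p c) (hpb : OnSide s p b c) :
    p ∈ interior (convexHull ℝ ({a, b, c} : Set (ℝ × ℝ))) := by
  wlog hlt : a.1 < p.1 ∧ p.1 < b.1 generalizing a b
  · rw [Set.insert_comm]
    exact this (Set.uIoo_comm a.1 b.1 ▸ hp) (onSide_comm.1 hab) (onSide_comm.1 hpb)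
      (onSide_comm.1 hap) ((mem_uIoo_cases hp).resolve_left hlt)
  rw [onSide_iff_of_lt (hlt.1.trans hlt.2)] at hab
  rw [onSide_iff_of_lt hlt.1, orient_rotate c a p] at hap
  rw [onSide_iff_of_lt hlt.2, ← orient_rotate p b c] at hpb
  rcases Int.units_eq_one_or s with rfl | rfl
  · rw [one_smul] at hab hap hpb
    exact mem_interior_convexHull_of_orient_pos hab hpb hap
  · rw [Units.neg_smul, one_smul, ← orient_swap] at hab hap hpb
    rw [Set.insert_comm]
    exact mem_interior_convexHull_of_orient_pos hab hap hpb

theorem DeepBelow.onSide {X Y : Set (ℝ × ℝ)} (h : DeepBelow X Y) (hX : DistinctX X)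
    (ha : a ∈ X) (hb : b ∈ X) (hab : a ≠ b) (hp : p ∈ Y) : OnSide 1 a b p := by
  wlog hlt : a.1 < b.1 generalizing a b
  · exact onSide_comm.1
      (this hb ha hab.symm ((hX a ha b hb hab).symm.lt_of_le (not_lt.1 hlt)))
  rw [onSide_iff_of_lt hlt, one_smul]
  exact sub_pos.2 (h a ha b hb hlt p hp)

theorem HighAbove.onSide {X Y : Set (ℝ × ℝ)} (h : HighAbove Y X) (hY : DistinctX Y)
    (ha : a ∈ Y) (hb : b ∈ Y) (hab : a ≠ b) (hp : p ∈ X) : OnSide (-1) a b p := by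
  wlog hlt : a.1 < b.1 generalizing a b
  · exact onSide_comm.1
      (this hb ha hab.symm ((hY a ha b hb hab).symm.lt_of_le (not_lt.1 hlt)))
  rw [onSide_iff_of_lt hlt, Units.neg_smul, one_smul]
  exact neg_pos.2 (sub_neg.2 (h a ha b hb hlt p hp))

end Orientation

theorem DistinctX.mono {S T : Set (ℝ × ℝ)} (hT : DistinctX T) (hST : S ⊆ T) : DistinctX S :=
  fun a ha b hb => hT a (hST ha) b (hST hb)

theorem DistinctX.injOn_fst {S : Set (ℝ × ℝ)} (hS : DistinctX S) : Set.InjOn Prod.fst S :=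
  fun a ha b hb => not_imp_not.1 (hS a ha b hb)

section Rank

variable {H : Finset (ℝ × ℝ)} {a b : ℝ × ℝ}

/-- The index of `p` in the increasing order of `x`-coordinates of `H`, counted from `0`. -/
def xRank (H : Finset (ℝ × ℝ)) (p : ℝ × ℝ) : ℕ :=
  (H.filter fun q => q.1 < p.1).card

theorem mem_evenPart : a ∈ evenPart H ↔ a ∈ H ∧ xRank H a % 2 = 0 := by
  rw [evenPart, Finset.mem_filter, Nat.even_iff, xRank]

theorem mem_oddPart : a ∈ oddPart H ↔ a ∈ H ∧ xRank H a % 2 = 1 := by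
  rw [oddPart, Finset.mem_filter, Nat.not_even_iff, xRank]

theorem xRank_lt_xRank_iff (ha : a ∈ H) : xRank H a < xRank H b ↔ a.1 < b.1 := by
  constructor
  · contrapose!
    exact fun hba => Finset.card_le_card
      (Finset.monotone_filter_right H fun q _ hq => hq.trans_le hba)
  · intro hab
    refine Finset.card_lt_card ⟨Finset.monotone_filter_right H fun q _ hq => hq.trans hab, ?_⟩
    exact fun hsub => (Finset.mem_filter.1 (hsub (Finset.mem_filter.2 ⟨ha, hab⟩))).2.false

theorem xRank_lt_card (ha : a ∈ H) : xRank H a < H.card :=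
  Finset.card_lt_card (Finset.filter_ssubset.2 ⟨a, ha, lt_irrefl _⟩)

theorem DistinctX.injOn_xRank (hH : DistinctX ↑H) : Set.InjOn (xRank H) H := by
  intro a ha b hb hab
  refine hH.injOn_fst ha hb (le_antisymm ?_ ?_)
  · exact not_lt.1 fun hlt => ((xRank_lt_xRank_iff hb).2 hlt).ne' hab
  · exact not_lt.1 fun hlt => ((xRank_lt_xRank_iff ha).2 hlt).ne hab

theorem DistinctX.exists_xRank_eq (hH : DistinctX ↑H) {i : ℕ} (hi : i < H.card) :
    ∃ c ∈ H, xRank H c = i := by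
  have surjOn := Finset.surjOn_of_injOn_of_card_le (t := Finset.range H.card) (xRank H)
    (fun a ha => Finset.mem_coe.2 (Finset.mem_range.2 (xRank_lt_card ha))) hH.injOn_xRank
    (Finset.card_range _).le
  exact surjOn (Finset.mem_coe.2 (Finset.mem_range.2 hi))

theorem DistinctX.exists_between_of_xRank_mod_two_eq (hH : DistinctX ↑H) (ha : a ∈ H)
    (hb : b ∈ H) (hab : a ≠ b) (hmod : xRank H a % 2 = xRank H b % 2) :
    ∃ c ∈ H, c.1 ∈ Set.uIoo a.1 b.1 ∧ xRank H c % 2 = (xRank H a + 1) % 2 := by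
  wlog hlt : a.1 < b.1 generalizing a b
  · obtain ⟨c, hc, hcab, hcmod⟩ := this hb ha hab.symm hmod.symm
      ((hH a ha b hb hab).symm.lt_of_le (not_lt.1 hlt))
    exact ⟨c, hc, Set.uIoo_comm a.1 b.1 ▸ hcab, by omega⟩
  have rank_lt := (xRank_lt_xRank_iff ha).2 hlt
  have rank_lt_card := xRank_lt_card hb
  obtain ⟨c, hc, hrank⟩ := hH.exists_xRank_eq (i := xRank H a + 1) (by omega)
  exact ⟨c, hc, Set.mem_uIoo_of_lt ((xRank_lt_xRank_iff ha).1 (by omega))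
    ((xRank_lt_xRank_iff hc).1 (by omega)), by omega⟩

theorem DistinctX.card_le_of_xRank_mod_two_eq (hH : DistinctX ↑H) {P : Finset (ℝ × ℝ)} {r : ℕ}
    (hP : ∀ p ∈ P, p ∈ H ∧ xRank H p % 2 = r) : P.card ≤ (H.card + 1) / 2 := by
  rw [← Finset.card_range ((H.card + 1) / 2)]
  refine Finset.card_le_card_of_injOn (fun p => xRank H p / 2) (fun p hp => ?_)
    fun a ha b hb hab => ?_
  · have rank_lt_card := xRank_lt_card (hP p hp).1
    rw [Finset.mem_coe, Finset.mem_range]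
    dsimp only
    omega
  · obtain ⟨haH, ha_mod⟩ := hP a ha
    obtain ⟨hbH, hb_mod⟩ := hP b hb
    dsimp only at hab
    exact hH.injOn_xRank haH hbH (by omega)

end Rank

/-- `A` and `B` split `H` as the two halves of a Horton set do: they partition `H` evenly, they
alternate in `x`-order, `B` lies on the side `s` of every line through two points of `A`, and `A`
on the side `-s` of every line through two points of `B`. For `s = 1`, the pair `(A, B)` is
`(H₀, H₁)`; allowing `s = -1` makes the notion symmetric in the two halves. -/
structure Split (s : ℤˣ) (H A B : Finset (ℝ × ℝ)) : Prop where
  distinctX : DistinctX ↑H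
  union_eq : A ∪ B = H
  card_add_card : A.card + B.card = H.card
  card_left_le : A.card ≤ (H.card + 1) / 2
  card_right_le : B.card ≤ (H.card + 1) / 2
  exists_right_between : ∀ a ∈ A, ∀ b ∈ A, a ≠ b → ∃ c ∈ B, c.1 ∈ Set.uIoo a.1 b.1
  exists_left_between : ∀ a ∈ B, ∀ b ∈ B, a ≠ b → ∃ c ∈ A, c.1 ∈ Set.uIoo a.1 b.1
  onSide_right : ∀ a ∈ A, ∀ b ∈ A, a ≠ b → ∀ p ∈ B, OnSide s a b p
  onSide_left : ∀ a ∈ B, ∀ b ∈ B, a ≠ b → ∀ p ∈ A, OnSide (-s) a b p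

theorem split_evenPart_oddPart {H : Finset (ℝ × ℝ)} (hH : DistinctX ↑H)
    (hhigh : HighAbove ↑(oddPart H) ↑(evenPart H))
    (hdeep : DeepBelow ↑(evenPart H) ↑(oddPart H)) : Split 1 H (evenPart H) (oddPart H) where
  distinctX := hH
  union_eq := Finset.filter_union_filter_not_eq _ H
  card_add_card := Finset.card_filter_add_card_filter_not _
  card_left_le := hH.card_le_of_xRank_mod_two_eq fun _ => mem_evenPart.1
  card_right_le := hH.card_le_of_xRank_mod_two_eq fun _ => mem_oddPart.1
  exists_right_between a ha b hb hab := by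
    rw [mem_evenPart] at ha hb
    obtain ⟨c, hc, hcab, hmod⟩ :=
      hH.exists_between_of_xRank_mod_two_eq ha.1 hb.1 hab (ha.2.trans hb.2.symm)
    exact ⟨c, mem_oddPart.2 ⟨hc, by omega⟩, hcab⟩
  exists_left_between a ha b hb hab := by
    rw [mem_oddPart] at ha hb
    obtain ⟨c, hc, hcab, hmod⟩ :=
      hH.exists_between_of_xRank_mod_two_eq ha.1 hb.1 hab (ha.2.trans hb.2.symm)
    exact ⟨c, mem_evenPart.2 ⟨hc, by omega⟩, hcab⟩
  onSide_right _ ha _ hb hab _ hp :=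
    hdeep.onSide (hH.mono (Finset.filter_subset _ H)) ha hb hab hp
  onSide_left _ ha _ hb hab _ hp :=
    hhigh.onSide (hH.mono (Finset.filter_subset _ H)) ha hb hab hp

theorem Split.swap {s : ℤˣ} {H A B : Finset (ℝ × ℝ)} (h : Split s H A B) : Split (-s) H B A where
  distinctX := h.distinctX
  union_eq := by rw [Finset.union_comm, h.union_eq]
  card_add_card := by rw [add_comm, h.card_add_card]
  card_left_le := h.card_right_le
  card_right_le := h.card_left_le
  exists_right_between := h.exists_left_between
  exists_left_between := h.exists_right_between
  onSide_right := h.onSide_left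
  onSide_left := by rw [neg_neg]; exact h.onSide_right

theorem IsHorton.exists_split {H : Finset (ℝ × ℝ)} (hH : IsHorton H) (hcard : 2 < H.card)
    (s : ℤˣ) : ∃ A B, IsHorton A ∧ IsHorton B ∧ Split s H A B := by
  cases hH with
  | small _ _ _ hle => omega
  | split _ _ hx _ h0 h1 hhigh hdeep =>
    have hsplit := split_evenPart_oddPart hx hhigh hdeep
    rcases Int.units_eq_one_or s with rfl | rfl
    · exact ⟨_, _, h0, h1, hsplit⟩
    · exact ⟨_, _, h1, h0, hsplit.swap⟩

theorem IsHorton.exists_split_mem_left {H : Finset (ℝ × ℝ)} (hH : IsHorton H)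
    (hcard : 2 < H.card) {q : ℝ × ℝ} (hq : q ∈ H) :
    ∃ s A B, IsHorton A ∧ IsHorton B ∧ Split s H A B ∧ q ∈ A := by
  obtain ⟨A, B, hA, hB, hsplit⟩ := hH.exists_split hcard 1
  rw [← hsplit.union_eq, Finset.mem_union] at hq
  rcases hq with hqA | hqB
  · exact ⟨_, A, B, hA, hB, hsplit, hqA⟩
  · exact ⟨_, B, A, hB, hA, hsplit.swap, hqB⟩

/-- The segment `qa` is visible in `H` from the side `s`: no point of `H` whose `x`-coordinate is
between those of `q` and `a` lies on the side `s` of the line `qa`. -/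
def Visible (s : ℤˣ) (H : Finset (ℝ × ℝ)) (q a : ℝ × ℝ) : Prop :=
  ∀ c ∈ H, c.1 ∈ Set.uIoo q.1 a.1 → ¬ OnSide s q a c

/-- The neighbours of `q` in the graph of the segments of `H` visible from the side `s`. -/
def visibleNeighbors (s : ℤˣ) (H : Finset (ℝ × ℝ)) (q : ℝ × ℝ) : Finset (ℝ × ℝ) :=
  H.filter fun a => a ≠ q ∧ Visible s H q a

theorem mem_visibleNeighbors {s : ℤˣ} {H : Finset (ℝ × ℝ)} {q a : ℝ × ℝ} :
    a ∈ visibleNeighbors s H q ↔ a ∈ H ∧ a ≠ q ∧ Visible s H q a :=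
  Finset.mem_filter

theorem visibleNeighbors_inter_subset {s : ℤˣ} {H B : Finset (ℝ × ℝ)} (hB : B ⊆ H) (q : ℝ × ℝ) :
    visibleNeighbors s H q ∩ B ⊆ visibleNeighbors s B q := by
  intro a ha
  obtain ⟨⟨-, haq, hvis⟩, haB⟩ := (Finset.mem_inter.1 ha).imp_left mem_visibleNeighbors.1
  exact mem_visibleNeighbors.2 ⟨haB, haq, fun c hc => hvis c (hB hc)⟩

theorem card_visibleNeighbors_inter_le_two {s : ℤˣ} {H S : Finset (ℝ × ℝ)} {q : ℝ × ℝ}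
    (hH : DistinctX ↑H) (hq : q ∈ H)
    (h : ∀ a ∈ S, ∀ b ∈ S, a.1 ∈ Set.uIoo q.1 b.1 → ¬ Visible s H q b) :
    (visibleNeighbors s H q ∩ S).card ≤ 2 := by
  have neighbor_of_mem {a : ℝ × ℝ} (ha : a ∈ visibleNeighbors s H q ∩ S) :
      (a ∈ H ∧ a ≠ q ∧ Visible s H q a) ∧ a ∈ S :=
    (Finset.mem_inter.1 ha).imp_left mem_visibleNeighbors.1
  refine card_le_two_of_forall_notMem_uIoo (f := Prod.fst) (x := q.1)
    (hH.injOn_fst.mono fun a ha => (neighbor_of_mem ha).1.1) (fun a ha => ?_)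
    fun a ha b hb hab => ?_
  · obtain ⟨⟨haH, haq, -⟩, -⟩ := neighbor_of_mem ha
    exact hH a haH q hq haq
  · obtain ⟨⟨-, -, hvis⟩, hbS⟩ := neighbor_of_mem hb
    exact h a (neighbor_of_mem ha).2 b hbS hab hvis

namespace Split

variable {s : ℤˣ} {H A B : Finset (ℝ × ℝ)} {q a b : ℝ × ℝ}

theorem left_subset (h : Split s H A B) : A ⊆ H :=
  h.union_eq ▸ Finset.subset_union_left

theorem right_subset (h : Split s H A B) : B ⊆ H :=
  h.union_eq ▸ Finset.subset_union_right

theorem not_visible_of_left_left (h : Split s H A B) (hq : q ∈ A) (ha : a ∈ A) (haq : a ≠ q) :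
    ¬ Visible s H q a := by
  obtain ⟨c, hc, hcqa⟩ := h.exists_right_between q hq a ha haq.symm
  exact fun hvis => hvis c (h.right_subset hc) hcqa (h.onSide_right q hq a ha haq.symm c hc)

theorem not_visible_of_left_right (h : Split s H A B) (hq : q ∈ A) (ha : a ∈ B) (hb : b ∈ B)
    (hab : a.1 ∈ Set.uIoo q.1 b.1) : ¬ Visible s H q b := by
  have q_below := h.onSide_left a ha b hb (ne_of_fst_mem_uIoo_right hab) q hq
  exact fun hvis => hvis a (h.right_subset ha) hab (onSide_of_mem_uIoo hab q_below)

theorem not_visible_of_right_left (h : Split s H A B) (hq : q ∈ B) (ha : a ∈ A) (hb : b ∈ A)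
    (hab : a.1 ∈ Set.uIoo q.1 b.1) : ¬ Visible s H q b := by
  obtain ⟨c, hc, hcab⟩ := h.exists_right_between a ha b hb (ne_of_fst_mem_uIoo_right hab)
  have hcqb : c.1 ∈ Set.uIoo q.1 b.1 := mem_uIoo_trans hab hcab
  have b_below := h.onSide_left c hc q hq (ne_of_fst_mem_uIoo_left hcqb) b hb
  have c_above := onSide_of_mem_uIoo (Set.uIoo_comm q.1 b.1 ▸ hcqb) b_below
  exact fun hvis => hvis c (h.right_subset hc) hcqb (onSide_comm.1 c_above)

theorem card_visibleNeighbors_le (h : Split s H A B) {d : ℕ}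
    (hB : ∀ b ∈ B, (visibleNeighbors s B b).card ≤ d) (hq : q ∈ H) :
    (visibleNeighbors s H q).card ≤ d + 2 := by
  have neighbors_eq :
      visibleNeighbors s H q = visibleNeighbors s H q ∩ A ∪ visibleNeighbors s H q ∩ B := by
    rw [← Finset.inter_union_distrib_left, h.union_eq]
    exact (Finset.inter_eq_left.2 (Finset.filter_subset _ H)).symm
  have card_le := Finset.card_union_le (visibleNeighbors s H q ∩ A) (visibleNeighbors s H q ∩ B)
  rw [← neighbors_eq] at card_le
  rcases Finset.mem_union.1 (h.union_eq ▸ hq) with hqA | hqB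
  · have inter_left_eq : visibleNeighbors s H q ∩ A = ∅ := by
      refine Finset.eq_empty_of_forall_notMem fun a ha => ?_
      obtain ⟨⟨-, haq, hvis⟩, haA⟩ := (Finset.mem_inter.1 ha).imp_left mem_visibleNeighbors.1
      exact h.not_visible_of_left_left hqA haA haq hvis
    have card_inter_right := card_visibleNeighbors_inter_le_two h.distinctX hq
      fun a ha b hb => h.not_visible_of_left_right hqA ha hb
    rw [inter_left_eq, Finset.card_empty] at card_le
    omega
  · have card_inter_left := card_visibleNeighbors_inter_le_two h.distinctX hq
      fun a ha b hb => h.not_visible_of_right_left hqB ha hb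
    have card_inter_right := (Finset.card_le_card
      (visibleNeighbors_inter_subset h.right_subset q)).trans (hB q hqB)
    omega

end Split

theorem IsHorton.card_visibleNeighbors_le {H : Finset (ℝ × ℝ)} (hH : IsHorton H) (s : ℤˣ)
    {q : ℝ × ℝ} (hq : q ∈ H) : (visibleNeighbors s H q).card ≤ 2 * Nat.clog 2 H.card := by
  induction hn : H.card using Nat.strong_induction_on generalizing H q with
  | _ n ih =>
  subst hn
  rcases le_or_gt H.card 2 with hcard | hcard
  · have card_le : (visibleNeighbors s H q).card ≤ H.card - 1 := by
      rw [← Finset.card_erase_of_mem hq]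
      refine Finset.card_le_card fun a ha => ?_
      obtain ⟨haH, haq, -⟩ := mem_visibleNeighbors.1 ha
      exact Finset.mem_erase.2 ⟨haq, haH⟩
    have clog_pos : 1 < H.card → 0 < Nat.clog 2 H.card := Nat.clog_pos one_lt_two
    omega
  · obtain ⟨A, B, -, hB, hsplit⟩ := hH.exists_split hcard s
    have hBcard := hsplit.card_right_le
    have clog_le := clog_two_add_one_le hcard.le hBcard
    have card_le :=
      hsplit.card_visibleNeighbors_le (fun b hb => ih B.card (by omega) hB hb rfl) hq
    omega

section EmptyTriangles

variable {s : ℤˣ} {H A B : Finset (ℝ × ℝ)} {q : ℝ × ℝ} {t : Finset (ℝ × ℝ)}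

theorem finite_setOf_isEmptyTriangleOf (H : Finset (ℝ × ℝ)) :
    {t | IsEmptyTriangleOf ↑H t}.Finite :=
  H.powerset.finite_toSet.subset fun _ ht =>
    Finset.mem_coe.2 (Finset.mem_powerset.2 (Finset.coe_subset.1 ht.2.1))

theorem incidentCount_eq_zero_of_card_le_two (hH : H.card ≤ 2) (q : ℝ × ℝ) :
    incidentCount ↑H q = 0 := by
  have no_triangle : {t | IsEmptyTriangleOf ↑H t ∧ q ∈ t} = ∅ := by
    refine Set.eq_empty_of_forall_notMem fun t ⟨⟨htcard, htH, _⟩, _⟩ => ?_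
    have card_le := Finset.card_le_card (Finset.coe_subset.1 htH)
    omega
  rw [incidentCount, no_triangle, Set.ncard_empty]

theorem IsEmptyTriangleOf.of_subset {S T : Set (ℝ × ℝ)} (ht : IsEmptyTriangleOf T t) (hST : S ⊆ T)
    (htS : ↑t ⊆ S) : IsEmptyTriangleOf S t :=
  ⟨ht.1, htS, ht.2.2.1, fun p hp => ht.2.2.2 p (hST hp)⟩

theorem Split.visible_left_of_empty (h : Split s H A B) {u v w : ℝ × ℝ} (hu : u ∈ A)
    (hv : v ∈ A) (hw : w ∈ B)
    (hempty : ∀ p ∈ A, p ∉ interior (convexHull ℝ ({u, v, w} : Set (ℝ × ℝ)))) :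
    Visible s A u v := fun c hc hcuv hside =>
  hempty c hc <| mem_interior_convexHull_of_onSide hcuv hside
    (h.onSide_right u hu c hc (ne_of_fst_mem_uIoo_left hcuv).symm w hw)
    (h.onSide_right c hc v hv (ne_of_fst_mem_uIoo_right hcuv) w hw)

/-- A set of triangles with vertex `q ∈ A` containing every empty triangle with that vertex and a
vertex in `B`. A triangle with a vertex `b ∈ B` is recorded by its third vertex, which is a
neighbour of `q` or of `b`. -/
def crossingTriangles (s : ℤˣ) (A B : Finset (ℝ × ℝ)) (q : ℝ × ℝ) : Finset (Finset (ℝ × ℝ)) :=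
  B.biUnion fun b =>
    (visibleNeighbors s A q ∪ visibleNeighbors (-s) B b).image fun a => {q, b, a}

theorem card_crossingTriangles_le {d : ℕ} (hA : (visibleNeighbors s A q).card ≤ d)
    (hB : ∀ b ∈ B, (visibleNeighbors (-s) B b).card ≤ d) :
    (crossingTriangles s A B q).card ≤ B.card * (2 * d) := by
  refine Finset.card_biUnion_le_card_mul _ _ _ fun b hb => Finset.card_image_le.trans ?_
  have card_union_le := Finset.card_union_le (visibleNeighbors s A q) (visibleNeighbors (-s) B b)
  have card_right_le := hB b hb
  omega

theorem Split.mem_crossingTriangles (h : Split s H A B) (hq : q ∈ A)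
    (ht : IsEmptyTriangleOf ↑H t) (hqt : q ∈ t) (htA : ¬ t ⊆ A) :
    t ∈ crossingTriangles s A B q := by
  obtain ⟨htcard, htH, -, hempty⟩ := ht
  obtain ⟨b, hbt, hbA⟩ := Finset.not_subset.1 htA
  have mem_left_or_right {p : ℝ × ℝ} (hp : p ∈ t) : p ∈ A ∨ p ∈ B :=
    Finset.mem_union.1 (h.union_eq ▸ htH hp)
  have hb : b ∈ B := (mem_left_or_right hbt).resolve_left hbA
  obtain ⟨a, haq, hab, rfl⟩ :=
    exists_eq_triple_of_card_eq_three htcard hqt hbt (ne_of_mem_of_not_mem hq hbA)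
  rw [crossingTriangles, Finset.mem_biUnion]
  refine ⟨b, hb, Finset.mem_image_of_mem _ (Finset.mem_union.2 ?_)⟩
  simp only [Finset.coe_insert, Finset.coe_singleton] at hempty
  rcases mem_left_or_right (by simp : a ∈ _) with ha | ha
  · refine .inl (mem_visibleNeighbors.2 ⟨ha, haq, h.visible_left_of_empty hq ha hb fun p hp => ?_⟩)
    rw [Set.pair_comm a b]
    exact hempty p (h.left_subset hp)
  · refine .inr (mem_visibleNeighbors.2
      ⟨ha, hab, h.swap.visible_left_of_empty hb ha hq fun p hp => ?_⟩)
    rw [Set.pair_comm a q, Set.insert_comm b q]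
    exact hempty p (h.right_subset hp)

theorem Split.incidentCount_le (h : Split s H A B) (hq : q ∈ A) :
    incidentCount ↑H q ≤ incidentCount ↑A q + (crossingTriangles s A B q).card := by
  have finite_incident : {t | IsEmptyTriangleOf ↑A t ∧ q ∈ t}.Finite :=
    (finite_setOf_isEmptyTriangleOf A).subset fun _ => And.left
  have hsub : {t | IsEmptyTriangleOf ↑H t ∧ q ∈ t} ⊆
      {t | IsEmptyTriangleOf ↑A t ∧ q ∈ t} ∪ ↑(crossingTriangles s A B q) := by
    rintro t ⟨ht, hqt⟩
    by_cases htA : t ⊆ A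
    · exact .inl ⟨ht.of_subset h.left_subset htA, hqt⟩
    · exact .inr (h.mem_crossingTriangles hq ht hqt htA)
  calc incidentCount ↑H q
      ≤ ({t | IsEmptyTriangleOf ↑A t ∧ q ∈ t} ∪ ↑(crossingTriangles s A B q)).ncard :=
        Set.ncard_le_ncard hsub (finite_incident.union (Finset.finite_toSet _))
    _ ≤ incidentCount ↑A q + (crossingTriangles s A B q).card := by
        rw [← Set.ncard_coe_finset (crossingTriangles s A B q)]
        exact Set.ncard_union_le _ _

end EmptyTriangles

theorem IsHorton.incidentCount_le {H : Finset (ℝ × ℝ)} (hH : IsHorton H) {q : ℝ × ℝ}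
    (hq : q ∈ H) : incidentCount ↑H q ≤ 4 * H.card * Nat.clog 2 H.card := by
  induction hn : H.card using Nat.strong_induction_on generalizing H with
  | _ n ih =>
  subst hn
  rcases le_or_gt H.card 2 with hcard | hcard
  · rw [incidentCount_eq_zero_of_card_le_two hcard]
    exact Nat.zero_le _
  obtain ⟨s, A, B, hA, hB, hsplit, hqA⟩ := hH.exists_split_mem_left hcard hq
  have hAcard := hsplit.card_left_le
  have clog_left_le : Nat.clog 2 A.card ≤ Nat.clog 2 H.card :=
    Nat.clog_mono_right 2 (Finset.card_le_card hsplit.left_subset)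
  have clog_right_le : Nat.clog 2 B.card ≤ Nat.clog 2 H.card :=
    Nat.clog_mono_right 2 (Finset.card_le_card hsplit.right_subset)
  have card_crossing : (crossingTriangles s A B q).card ≤ B.card * (2 * (2 * Nat.clog 2 H.card)) :=
    card_crossingTriangles_le ((hA.card_visibleNeighbors_le s hqA).trans (by omega))
      fun b hb => (hB.card_visibleNeighbors_le (-s) hb).trans (by omega)
  calc incidentCount ↑H q
      ≤ incidentCount ↑A q + (crossingTriangles s A B q).card := hsplit.incidentCount_le hqA
    _ ≤ 4 * A.card * Nat.clog 2 H.card + B.card * (2 * (2 * Nat.clog 2 H.card)) := by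
        gcongr
        exact (ih A.card (by omega) hA hqA rfl).trans (by gcongr)
    _ = 4 * H.card * Nat.clog 2 H.card := by
        rw [← hsplit.card_add_card]
        ring

/-- Every point of a Horton set of `n` points is a vertex of `O(n log n)` empty triangles. -/
theorem horton_incident_bound :
    ∃ C : ℝ, 0 < C ∧ ∀ H : Finset (ℝ × ℝ), IsHorton H → 2 ≤ H.card →
      ∀ q ∈ H,
        (incidentCount ↑H q : ℝ) ≤ C * (H.card : ℝ) * Real.log (H.card : ℝ) := by
  refine ⟨8 / Real.log 2, by positivity, fun H hH hn q hq => ?_⟩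
  calc (incidentCount ↑H q : ℝ)
      ≤ 4 * H.card * Nat.clog 2 H.card := by exact_mod_cast hH.incidentCount_le hq
    _ ≤ 4 * H.card * (2 * Real.logb 2 H.card) := by
        gcongr
        exact clog_two_le_two_mul_logb hn
    _ = 8 / Real.log 2 * H.card * Real.log H.card := by
        rw [Real.logb]
        ring
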